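/- There is an absolute constant C > 0 such that for every integer n ≥ 2, every positive definite Hankel matrix H ∈ ℝ^{n×n}, and every integer k with 0 ≤ k ≤ n, the best rank-k approximation H_k of H satisfies ‖H − H_k‖_F ≤ C·√(ln n)·‖H − H_k‖₂; in particular (taking k = 0), ‖H‖_F ≤ C·√(ln n)·‖H‖₂. -/

import Mathlib

open scoped BigOperators

/-- A matrix is Hankel if its entries depend only on the sum of the indices. -/
def IsHankel {n : ℕ} (A : Matrix (Fin n) (Fin n) ℝ) : Prop :=
  ∀ i j k l : Fin n, (i : ℕ) + (j : ℕ) = (k : ℕ) + (l : ℕ) → A i j = A k l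

/-- Euclidean (ℓ₂) norm of a vector. -/
noncomputable def euclNorm {n : ℕ} (x : Fin n → ℝ) : ℝ := Real.sqrt (∑ i, x i ^ 2)

/-- Spectral norm of a matrix: supremum of ‖Ax‖₂ over the Euclidean unit ball. -/
noncomputable def specNorm {n : ℕ} (A : Matrix (Fin n) (Fin n) ℝ) : ℝ :=
  ⨆ x : {x : Fin n → ℝ // euclNorm x ≤ 1}, euclNorm (A.mulVec x.1)

/-- Frobenius norm of a matrix. -/
noncomputable def froNorm {n : ℕ} (A : Matrix (Fin n) (Fin n) ℝ) : ℝ :=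
  Real.sqrt (∑ i, ∑ j, (A i j) ^ 2)

/-!
The square `y` of the Cayley transform `(x - 1) / (x + 1)` maps the real line to `[0, ∞]` and the
unit circle to `[-∞, 0]`.  For nodes `a i ≥ 0`, let `P` and `Q` be the numerators of
`∏ i, (y + a i)` and `∏ i, (y - a i)`.  Then `|Q| ≤ |P|` on the real line, while `|P| ≤ |Q|` on the
unit circle.  Identify a vector with the polynomial having it as coefficients.  The quadratic form
of a positive semidefinite Hankel matrix is a positive moment functional applied to the square of
the polynomial, so passing from `w * Q` to `w * P` can only increase the form.  The Euclidean norm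
is, by Parseval, an average of the squared modulus over the roots of `z ^ M = -1` with `M = 2 * n`.
These roots keep a distance at least `1 / n` from `1` and `-1`, so `O(log n)` nodes in geometric
progression come within a factor `4` of `|y|` at each of them, and there `|P| ≤ 3 / 5 * |Q|`.

A dimension count produces a `w` for which `w * P` is orthogonal to the first `i` eigenvectors and
`w * Q` to the last `n - 1 - j` ones, where `j - i` is twice the number of nodes.  Comparing form
and norm on these two vectors gives `λ_j ≤ (3 / 5) ^ 2 * λ_i`.  Thus the eigenvalues decrease
geometrically over blocks of length `O(log n)`, and `∑_{i ≥ k} λ_i ^ 2 = O(log n) * λ_k ^ 2`.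
-/

open Matrix Polynomial
open scoped ComplexConjugate

section LinearAlgebra

lemma exists_ne_zero_forall_apply_eq_zero {K W ι : Type*} [Field K] [AddCommGroup W] [Module K W]
    [FiniteDimensional K W] [Fintype ι] (φ : ι → Module.Dual K W)
    (hι : Fintype.card ι < Module.finrank K W) : ∃ w ≠ 0, ∀ i, φ i w = 0 := by
  have hker : LinearMap.ker (LinearMap.pi φ) ≠ ⊥ :=
    LinearMap.ker_ne_bot_of_finrank_lt (by rwa [Module.finrank_fintype_fun_eq_card])
  obtain ⟨w, hw, hw0⟩ := Submodule.exists_mem_ne_zero_of_ne_bot hker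
  exact ⟨w, hw0, congrFun hw⟩

lemma eq_zero_of_rank_eq_zero {K m n : Type*} [Field K] [Finite m] [Fintype n]
    {A : Matrix m n K} (hA : A.rank = 0) : A = 0 := by
  have hrange : LinearMap.range A.mulVecLin = ⊥ := Submodule.finrank_eq_zero.1 hA
  classical
  exact toLin'.injective (by simpa [toLin'_apply'] using LinearMap.range_eq_bot.1 hrange)

end LinearAlgebra

section Norms

variable {n : ℕ}

lemma euclNorm_eq_norm (x : Fin n → ℝ) : euclNorm x = ‖WithLp.toLp 2 x‖ := by
  simp [euclNorm, EuclideanSpace.norm_eq]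

lemma specNorm_eq_norm (A : Matrix (Fin n) (Fin n) ℝ) :
    specNorm A = ‖toEuclideanCLM (𝕜 := ℝ) A‖ := by
  rw [← ContinuousLinearMap.sSup_unitClosedBall_eq_norm, sSup_image']
  refine (WithLp.equiv 2 (Fin n → ℝ)).symm.subtypeEquiv (fun x => ?_) |>.iSup_congr fun x => ?_
  · simp [euclNorm_eq_norm]
  · simp [euclNorm_eq_norm]

lemma specNorm_nonneg (A : Matrix (Fin n) (Fin n) ℝ) : 0 ≤ specNorm A :=
  specNorm_eq_norm A ▸ norm_nonneg _

lemma dotProduct_mulVec_le_specNorm_mul (A : Matrix (Fin n) (Fin n) ℝ) (x : Fin n → ℝ) :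
    x ⬝ᵥ A *ᵥ x ≤ specNorm A * (x ⬝ᵥ x) := by
  set v : EuclideanSpace ℝ (Fin n) := WithLp.toLp 2 x with hv
  calc x ⬝ᵥ A *ᵥ x = inner ℝ v (toEuclideanCLM (𝕜 := ℝ) A v) := (inner_toEuclideanCLM A v v).symm
    _ ≤ ‖v‖ * ‖toEuclideanCLM (𝕜 := ℝ) A v‖ := real_inner_le_norm _ _
    _ ≤ ‖v‖ * (‖toEuclideanCLM (𝕜 := ℝ) A‖ * ‖v‖) := by
      gcongr
      exact ContinuousLinearMap.le_opNorm _ _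
    _ = specNorm A * ‖v‖ ^ 2 := by rw [specNorm_eq_norm]; ring
    _ = specNorm A * (x ⬝ᵥ x) := by
      rw [EuclideanSpace.real_norm_sq_eq]
      simp [dotProduct, sq, hv]

lemma froNorm_sq_eq_trace (A : Matrix (Fin n) (Fin n) ℝ) : froNorm A ^ 2 = (A * Aᵀ).trace := by
  rw [froNorm, Real.sq_sqrt (by positivity)]
  simp [trace, mul_apply, sq]

lemma froNorm_sq_conj_diagonal {U : Matrix (Fin n) (Fin n) ℝ} (hU : U ∈ orthogonalGroup (Fin n) ℝ)
    (l : Fin n → ℝ) : froNorm (U * diagonal l * Uᵀ) ^ 2 = ∑ i, l i ^ 2 := by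
  have hUU : Uᵀ * U = 1 := (mem_orthogonalGroup_iff' _ _).1 hU
  calc froNorm (U * diagonal l * Uᵀ) ^ 2
      = (U * (diagonal l * (Uᵀ * U) * diagonal l * Uᵀ)).trace := by
        simp only [froNorm_sq_eq_trace, transpose_mul, transpose_transpose, diagonal_transpose,
          Matrix.mul_assoc]
    _ = (diagonal l * (Uᵀ * U) * diagonal l * (Uᵀ * U)).trace := by
        rw [trace_mul_comm, Matrix.mul_assoc (_ * diagonal l)]
    _ = ∑ i, l i ^ 2 := by simp [hUU, trace, sq]

end Norms

section OrthogonalDiagonalization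

lemma exists_orthogonal_antitone_diagonalization {n : ℕ} {H : Matrix (Fin n) (Fin n) ℝ}
    (hH : H.IsHermitian) :
    ∃ U ∈ orthogonalGroup (Fin n) ℝ, ∃ σ : Equiv.Perm (Fin n),
      Antitone (hH.eigenvalues ∘ σ) ∧ H = U * diagonal (hH.eigenvalues ∘ σ) * Uᵀ := by
  set V : Matrix (Fin n) (Fin n) ℝ := hH.eigenvectorUnitary.1
  have hVV : V * Vᵀ = 1 := (mem_orthogonalGroup_iff _ _).1 hH.eigenvectorUnitary.2
  have hHV : H = V * diagonal hH.eigenvalues * Vᵀ := by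
    conv_lhs => rw [hH.spectral_theorem, Unitary.conjStarAlgAut_apply]
    rfl
  let σ := Tuple.sort (-hH.eigenvalues)
  refine ⟨V.submatrix id σ, (mem_orthogonalGroup_iff _ _).2 ?_, σ, fun i j hij => ?_, ?_⟩
  · simp [hVV]
  · exact neg_le_neg_iff.1 (Tuple.monotone_sort (-hH.eigenvalues) hij)
  · rw [← submatrix_diagonal_equiv, transpose_submatrix, submatrix_mul_equiv, submatrix_mul_equiv,
      ← hHV, submatrix_id_id]

variable {ι : Type*} [Fintype ι] {U : Matrix ι ι ℝ} {l : ι → ℝ}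

lemma dotProduct_conj_diagonal_mulVec [DecidableEq ι] (U : Matrix ι ι ℝ) (l x : ι → ℝ) :
    x ⬝ᵥ (U * diagonal l * Uᵀ) *ᵥ x = ∑ i, l i * (Uᵀ *ᵥ x) i ^ 2 := by
  rw [← mulVec_mulVec, ← mulVec_mulVec, dotProduct_mulVec, ← mulVec_transpose]
  simp only [dotProduct, mulVec_diagonal]
  exact Finset.sum_congr rfl fun i _ => by ring

lemma sum_transpose_mulVec_sq [DecidableEq ι] (hU : U ∈ orthogonalGroup ι ℝ) (x : ι → ℝ) :
    ∑ i, (Uᵀ *ᵥ x) i ^ 2 = x ⬝ᵥ x := by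
  simpa [(mem_orthogonalGroup_iff _ _).1 hU] using (dotProduct_conj_diagonal_mulVec U 1 x).symm

variable [LinearOrder ι]

lemma dotProduct_conj_diagonal_mulVec_le (hU : U ∈ orthogonalGroup ι ℝ) (hl : Antitone l) {i : ι}
    {x : ι → ℝ} (hx : ∀ b < i, (Uᵀ *ᵥ x) b = 0) :
    x ⬝ᵥ (U * diagonal l * Uᵀ) *ᵥ x ≤ l i * (x ⬝ᵥ x) := by
  rw [dotProduct_conj_diagonal_mulVec, ← sum_transpose_mulVec_sq hU, Finset.mul_sum]
  refine Finset.sum_le_sum fun b _ => ?_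
  rcases lt_or_ge b i with hb | hb
  · simp [hx b hb]
  · exact mul_le_mul_of_nonneg_right (hl hb) (sq_nonneg _)

lemma le_dotProduct_conj_diagonal_mulVec (hU : U ∈ orthogonalGroup ι ℝ) (hl : Antitone l) {j : ι}
    {x : ι → ℝ} (hx : ∀ b > j, (Uᵀ *ᵥ x) b = 0) :
    l j * (x ⬝ᵥ x) ≤ x ⬝ᵥ (U * diagonal l * Uᵀ) *ᵥ x := by
  rw [dotProduct_conj_diagonal_mulVec, ← sum_transpose_mulVec_sq hU, Finset.mul_sum]
  refine Finset.sum_le_sum fun b _ => ?_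
  rcases lt_or_ge j b with hb | hb
  · simp [hx b hb]
  · exact mul_le_mul_of_nonneg_right (hl hb) (sq_nonneg _)

end OrthogonalDiagonalization

section LowRankApproximation

variable {n : ℕ} {U : Matrix (Fin n) (Fin n) ℝ} {l : Fin n → ℝ}

lemma le_specNorm_conj_diagonal_sub (hU : U ∈ orthogonalGroup (Fin n) ℝ) (hl : Antitone l)
    {k : Fin n} {B : Matrix (Fin n) (Fin n) ℝ} (hB : B.rank ≤ k) :
    l k ≤ specNorm (U * diagonal l * Uᵀ - B) := by
  have hdim : Fintype.card (Finset.Ioi k) < Module.finrank ℝ (LinearMap.ker B.mulVecLin) := by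
    have hrn := B.mulVecLin.finrank_range_add_finrank_ker
    have hB' : Module.finrank ℝ (LinearMap.range B.mulVecLin) ≤ k := hB
    simp only [Module.finrank_fin_fun] at hrn
    rw [Fintype.card_coe, Fin.card_Ioi]
    omega
  obtain ⟨⟨x, hBx⟩, hx0, hx⟩ := exists_ne_zero_forall_apply_eq_zero
    (fun b : Finset.Ioi k => (LinearMap.proj b.1 ∘ₗ Uᵀ.mulVecLin).domRestrict _) hdim
  have hBx' : B *ᵥ x = 0 := hBx
  have hxx : 0 < x ⬝ᵥ x := dotProduct_self_star_pos_iff.2 fun h => hx0 (Subtype.ext h)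
  refine le_of_mul_le_mul_right ?_ hxx
  calc l k * (x ⬝ᵥ x) ≤ x ⬝ᵥ (U * diagonal l * Uᵀ) *ᵥ x :=
        le_dotProduct_conj_diagonal_mulVec hU hl fun b hb => hx ⟨b, Finset.mem_Ioi.2 hb⟩
    _ = x ⬝ᵥ (U * diagonal l * Uᵀ - B) *ᵥ x := by rw [sub_mulVec, hBx', sub_zero]
    _ ≤ specNorm (U * diagonal l * Uᵀ - B) * (x ⬝ᵥ x) := dotProduct_mulVec_le_specNorm_mul _ _

lemma exists_rank_le_froNorm_conj_diagonal_sub_sq_eq (hU : U ∈ orthogonalGroup (Fin n) ℝ)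
    (l : Fin n → ℝ) (k : Fin n) :
    ∃ B : Matrix (Fin n) (Fin n) ℝ, B.rank ≤ k ∧
      froNorm (U * diagonal l * Uᵀ - B) ^ 2 = ∑ i ∈ Finset.Ici k, l i ^ 2 := by
  refine ⟨U * diagonal (fun i => if i < k then l i else 0) * Uᵀ, ?_, ?_⟩
  · calc (U * diagonal (fun i => if i < k then l i else 0) * Uᵀ).rank
        ≤ (diagonal (fun i => if i < k then l i else 0)).rank :=
          (rank_mul_le_left _ _).trans (rank_mul_le_right _ _)
      _ ≤ Fintype.card {i // i < k} := by
          rw [rank_diagonal]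
          exact Fintype.card_subtype_mono _ _ fun i hi => by_contra fun h => hi (if_neg h)
      _ = k := by simp [Fintype.card_subtype, Finset.filter_gt_eq_Iio]
  · rw [← Matrix.sub_mul, ← Matrix.mul_sub, diagonal_sub, froNorm_sq_conj_diagonal hU,
      ← Finset.filter_le_eq_Ici, Finset.sum_filter]
    refine Finset.sum_congr rfl fun i _ => ?_
    rcases lt_or_ge i k with hik | hik
    · simp [hik, hik.not_ge]
    · simp [hik, hik.not_gt]

end LowRankApproximation

section EigenvalueDecay

lemma le_mul_of_forall_dotProduct_le {n : ℕ} {U : Matrix (Fin n) (Fin n) ℝ} {l : Fin n → ℝ}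
    {W : Type*} [AddCommGroup W] [Module ℝ W] [FiniteDimensional ℝ W]
    (hU : U ∈ orthogonalGroup (Fin n) ℝ) (hl : Antitone l)
    {P Q : W →ₗ[ℝ] Fin n → ℝ} (hQ : Function.Injective Q) {c : ℝ}
    (hform : ∀ w, Q w ⬝ᵥ (U * diagonal l * Uᵀ) *ᵥ Q w ≤ P w ⬝ᵥ (U * diagonal l * Uᵀ) *ᵥ P w)
    (hnorm : ∀ w, P w ⬝ᵥ P w ≤ c * (Q w ⬝ᵥ Q w))
    {i j : Fin n} (hi : 0 ≤ l i) (hij : n + i ≤ Module.finrank ℝ W + j) :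
    l j ≤ c * l i := by
  let φ : Finset.Iio i ⊕ Finset.Ioi j → Module.Dual ℝ W :=
    Sum.elim (fun b => LinearMap.proj b.1 ∘ₗ Uᵀ.mulVecLin ∘ₗ P)
      (fun b => LinearMap.proj b.1 ∘ₗ Uᵀ.mulVecLin ∘ₗ Q)
  have hdim : Fintype.card (Finset.Iio i ⊕ Finset.Ioi j) < Module.finrank ℝ W := by
    rw [Fintype.card_sum, Fintype.card_coe, Fintype.card_coe, Fin.card_Iio, Fin.card_Ioi]
    omega
  obtain ⟨w, hw0, hw⟩ := exists_ne_zero_forall_apply_eq_zero φ hdim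
  have hPw : ∀ b < i, (Uᵀ *ᵥ P w) b = 0 := fun b hb => hw (.inl ⟨b, Finset.mem_Iio.2 hb⟩)
  have hQw : ∀ b > j, (Uᵀ *ᵥ Q w) b = 0 := fun b hb => hw (.inr ⟨b, Finset.mem_Ioi.2 hb⟩)
  have hQQ : 0 < Q w ⬝ᵥ Q w :=
    dotProduct_self_star_pos_iff.2 ((map_ne_zero_iff Q hQ).2 hw0)
  refine le_of_mul_le_mul_right ?_ hQQ
  calc l j * (Q w ⬝ᵥ Q w) ≤ Q w ⬝ᵥ (U * diagonal l * Uᵀ) *ᵥ Q w :=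
        le_dotProduct_conj_diagonal_mulVec hU hl hQw
    _ ≤ P w ⬝ᵥ (U * diagonal l * Uᵀ) *ᵥ P w := hform w
    _ ≤ l i * (P w ⬝ᵥ P w) := dotProduct_conj_diagonal_mulVec_le hU hl hPw
    _ ≤ l i * (c * (Q w ⬝ᵥ Q w)) := mul_le_mul_of_nonneg_left (hnorm w) hi
    _ = c * l i * (Q w ⬝ᵥ Q w) := by ring

lemma one_sub_mul_sum_Ici_le {n s : ℕ} {g : Fin n → ℝ} (hg : Antitone g) (hg0 : 0 ≤ g) {c : ℝ}
    (hc : 0 ≤ c) (hdecay : ∀ i j : Fin n, (i : ℕ) + s ≤ j → g j ≤ c * g i) (k : Fin n) :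
    (1 - c) * ∑ i ∈ Finset.Ici k, g i ≤ s * g k := by
  let near : Finset (Fin n) := {i ∈ Finset.Ici k | (i : ℕ) < k + s}
  let far : Finset (Fin n) := {i ∈ Finset.Ici k | ¬(i : ℕ) < k + s}
  let shift : Fin n → Fin n := fun i => ⟨i - s, by omega⟩
  have hfar : ∀ i ∈ far, (k : ℕ) + s ≤ i := fun i hi => not_lt.1 (Finset.mem_filter.1 hi).2
  have hnear_sum : ∑ i ∈ near, g i ≤ s * g k := by
    have hcard : near.card ≤ s := by
      calc near.card ≤ (Finset.Ico (k : ℕ) (k + s)).card :=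
            Finset.card_le_card_of_injOn Fin.val
              (fun i hi => by simpa [near] using hi) Fin.val_injective.injOn
        _ = s := by simp
    calc ∑ i ∈ near, g i ≤ near.card • g k :=
          Finset.sum_le_card_nsmul _ _ _ fun i hi =>
            hg (Finset.mem_Ici.1 (Finset.mem_filter.1 hi).1)
      _ ≤ s * g k := by
          rw [nsmul_eq_mul]
          exact mul_le_mul_of_nonneg_right (Nat.cast_le.2 hcard) (hg0 k)
  have hshift_inj : Set.InjOn shift far := fun i hi j hj hij => by
    have := hfar i hi
    have := hfar j hj
    simp only [shift, Fin.mk.injEq] at hij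
    omega
  have hfar_sum : ∑ i ∈ far, g i ≤ c * ∑ i ∈ Finset.Ici k, g i :=
    calc ∑ i ∈ far, g i ≤ ∑ i ∈ far, c * g (shift i) :=
          Finset.sum_le_sum fun i hi => hdecay _ _ (by have := hfar i hi; simp only [shift]; omega)
      _ = c * ∑ i ∈ far.image shift, g i := by rw [← Finset.mul_sum, Finset.sum_image hshift_inj]
      _ ≤ c * ∑ i ∈ Finset.Ici k, g i := by
          refine mul_le_mul_of_nonneg_left
            (Finset.sum_le_sum_of_subset_of_nonneg ?_ fun i _ _ => hg0 i) hc
          refine Finset.image_subset_iff.2 fun i hi => Finset.mem_Ici.2 (Fin.le_def.2 ?_)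
          have := hfar i hi
          simp only [shift]
          omega
  have hsplit : ∑ i ∈ near, g i + ∑ i ∈ far, g i = ∑ i ∈ Finset.Ici k, g i :=
    Finset.sum_filter_add_sum_filter_not _ _ _
  linarith

end EigenvalueDecay

section HankelMoments

/-- The moment functional of a sequence: the linear functional on polynomials with
`X ^ k ↦ h k`. -/
noncomputable def momentFunctional {R : Type*} [CommSemiring R] (h : ℕ → R) : R[X] →ₗ[R] R :=
  Polynomial.lsum fun k => LinearMap.mulRight R (h k)

lemma momentFunctional_monomial {R : Type*} [CommSemiring R] (h : ℕ → R) (k : ℕ) (c : R) :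
    momentFunctional h (monomial k c) = c * h k := by
  simp [momentFunctional]

lemma toFn_dotProduct_mulVec_toFn {R : Type*} [CommSemiring R] {n : ℕ}
    {H : Matrix (Fin n) (Fin n) R} {h : ℕ → R} (hH : ∀ i j : Fin n, H i j = h (i + j)) {p q : R[X]}
    (hp : p.natDegree < n) (hq : q.natDegree < n) :
    toFn n p ⬝ᵥ H *ᵥ toFn n q = momentFunctional h (p * q) := by
  classical
  conv_rhs =>
    rw [← ofFn_comp_toFn_eq_id_of_natDegree_lt hp, ← ofFn_comp_toFn_eq_id_of_natDegree_lt hq,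
      ofFn_eq_sum_monomial, ofFn_eq_sum_monomial, Finset.sum_mul_sum]
  simp only [map_sum, monomial_mul_monomial, momentFunctional_monomial, dotProduct, mulVec,
    Finset.mul_sum, hH]
  exact Finset.sum_congr rfl fun i _ => Finset.sum_congr rfl fun j _ => by ring

lemma toFn_ne_zero {R : Type*} [Semiring R] {n : ℕ} {p : R[X]} (hp : p.natDegree < n)
    (hp0 : p ≠ 0) : toFn n p ≠ 0 := fun h =>
  leadingCoeff_ne_zero.2 hp0 (congrFun h ⟨p.natDegree, hp⟩)

lemma IsHankel.exists_moments {n : ℕ} {H : Matrix (Fin n) (Fin n) ℝ} (hH : IsHankel H) :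
    ∃ h : ℕ → ℝ, ∀ i j : Fin n, H i j = h (i + j) := by
  have hfactors : (fun p : Fin n × Fin n => H p.1 p.2).FactorsThrough
      fun p => (p.1 + p.2 : ℕ) := fun p q hpq => hH _ _ _ _ hpq
  exact ⟨Function.extend _ _ 0, fun i j => (hfactors.extend_apply 0 (i, j)).symm⟩

lemma momentFunctional_sq_nonneg {n : ℕ} {H : Matrix (Fin n) (Fin n) ℝ} (hpos : H.PosSemidef)
    {h : ℕ → ℝ} (hH : ∀ i j : Fin n, H i j = h (i + j)) {q : ℝ[X]} (hq : q.natDegree < n) :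
    0 ≤ momentFunctional h (q ^ 2) := by
  rw [sq, ← toFn_dotProduct_mulVec_toFn hH hq hq]
  exact hpos.dotProduct_mulVec_nonneg (toFn n q)

end HankelMoments

section CayleyFactor

/-- The polynomial `(X + 1) ^ 2 * (((X - 1) / (X + 1)) ^ 2 - a)`.  The square of the Cayley
transform `(x - 1) / (x + 1)` is nonnegative on the real line and nonpositive on the unit circle,
so for `a ≥ 0` the quotient `cayleyFactor (-a) / cayleyFactor a` has absolute value at least one on
the former and at most one on the latter. -/
noncomputable def cayleyFactor {R : Type*} [CommRing R] (a : R) : R[X] :=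
  (X - 1) ^ 2 - C a * (X + 1) ^ 2

section CommRing

variable {R ι : Type*} [CommRing R]

lemma cayleyFactor_neg_sq (a : R) :
    cayleyFactor (-a) ^ 2 = cayleyFactor a ^ 2 + (4 * a) • (X ^ 2 - 1) ^ 2 := by
  simp only [cayleyFactor, smul_eq_C_mul, C_neg, C_mul, map_ofNat]
  ring

lemma natDegree_cayleyFactor_le (a : R) : (cayleyFactor a).natDegree ≤ 2 := by
  unfold cayleyFactor
  compute_degree

lemma natDegree_prod_cayleyFactor_le (a : ι → R) (s : Finset ι) :
    (∏ i ∈ s, cayleyFactor (a i)).natDegree ≤ 2 * s.card := by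
  calc (∏ i ∈ s, cayleyFactor (a i)).natDegree ≤ ∑ i ∈ s, (cayleyFactor (a i)).natDegree :=
        natDegree_prod_le _ _
    _ ≤ s.card • 2 := Finset.sum_le_card_nsmul _ _ _ fun i _ => natDegree_cayleyFactor_le (a i)
    _ = 2 * s.card := by rw [smul_eq_mul, mul_comm]

lemma natDegree_prod_cayleyFactor_mul_lt (a : ι → R) {s : Finset ι} {q : R[X]} {n : ℕ}
    (hq : q.natDegree + 2 * s.card < n) :
    ((∏ i ∈ s, cayleyFactor (a i)) * q).natDegree < n := by
  have hmul := natDegree_mul_le (p := ∏ i ∈ s, cayleyFactor (a i)) (q := q)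
  have hprod := natDegree_prod_cayleyFactor_le a s
  omega

end CommRing

lemma cayleyFactor_ne_zero (a : ℝ) : cayleyFactor a ≠ 0 := fun h => by
  have heval := congrArg (eval (-1)) h
  norm_num [cayleyFactor] at heval

section PositiveFunctional

variable {n : ℕ} {L : ℝ[X] →ₗ[ℝ] ℝ}

lemma map_cayleyFactor_mul_sq_le (hL : ∀ q : ℝ[X], q.natDegree < n → 0 ≤ L (q ^ 2)) {a : ℝ}
    (ha : 0 ≤ a) {q : ℝ[X]} (hq : q.natDegree + 2 < n) :
    L ((cayleyFactor a * q) ^ 2) ≤ L ((cayleyFactor (-a) * q) ^ 2) := by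
  have hdeg : ((X ^ 2 - 1) * q : ℝ[X]).natDegree < n := by
    have hX : (X ^ 2 - 1 : ℝ[X]).natDegree ≤ 2 := by compute_degree
    have hmul := natDegree_mul_le (p := (X ^ 2 - 1 : ℝ[X])) (q := q)
    omega
  have hdiff : (cayleyFactor (-a) * q) ^ 2 =
      (cayleyFactor a * q) ^ 2 + (4 * a) • ((X ^ 2 - 1) * q) ^ 2 := by
    rw [mul_pow, cayleyFactor_neg_sq, add_mul, smul_mul_assoc, mul_pow, mul_pow]
  rw [hdiff, map_add, map_smul, smul_eq_mul]
  exact le_add_of_nonneg_right (mul_nonneg (by positivity) (hL _ hdeg))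

lemma map_prod_cayleyFactor_mul_sq_le (hL : ∀ q : ℝ[X], q.natDegree < n → 0 ≤ L (q ^ 2))
    {ι : Type*} {a : ι → ℝ} (ha : ∀ i, 0 ≤ a i) (s : Finset ι) {q : ℝ[X]}
    (hq : q.natDegree + 2 * s.card < n) :
    L (((∏ i ∈ s, cayleyFactor (a i)) * q) ^ 2) ≤
      L (((∏ i ∈ s, cayleyFactor (-a i)) * q) ^ 2) := by
  classical
  induction s using Finset.induction_on generalizing q with
  | empty => simp
  | insert j s hj ih =>
    rw [Finset.card_insert_of_notMem hj] at hq
    have hdeg_ih : (cayleyFactor (a j) * q).natDegree + 2 * s.card < n := by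
      have hmul := natDegree_mul_le (p := cayleyFactor (a j)) (q := q)
      have hfactor := natDegree_cayleyFactor_le (a j)
      omega
    have hdeg_step : ((∏ i ∈ s, cayleyFactor (-a i)) * q).natDegree + 2 < n := by
      have hprod := natDegree_prod_cayleyFactor_mul_lt (fun i => -a i) (s := s) (q := q)
        (n := n - 2) (by omega)
      omega
    rw [Finset.prod_insert hj, Finset.prod_insert hj]
    calc L ((cayleyFactor (a j) * (∏ i ∈ s, cayleyFactor (a i)) * q) ^ 2)
        = L (((∏ i ∈ s, cayleyFactor (a i)) * (cayleyFactor (a j) * q)) ^ 2) := by ring_nf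
      _ ≤ L (((∏ i ∈ s, cayleyFactor (-a i)) * (cayleyFactor (a j) * q)) ^ 2) := ih hdeg_ih
      _ = L ((cayleyFactor (a j) * ((∏ i ∈ s, cayleyFactor (-a i)) * q)) ^ 2) := by ring_nf
      _ ≤ L ((cayleyFactor (-a j) * ((∏ i ∈ s, cayleyFactor (-a i)) * q)) ^ 2) :=
        map_cayleyFactor_mul_sq_le hL (ha j) hdeg_step
      _ = L ((cayleyFactor (-a j) * (∏ i ∈ s, cayleyFactor (-a i)) * q) ^ 2) := by ring_nf

end PositiveFunctional

section UnitCircle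

variable {z : ℂ}

lemma norm_aeval_cayleyFactor (hz : ‖z‖ = 1) (a : ℝ) :
    ‖aeval z (cayleyFactor a)‖ = |‖z - 1‖ ^ 2 + a * ‖z + 1‖ ^ 2| := by
  have hconj : z * conj z = 1 := by simp [Complex.mul_conj', hz]
  have hsub : ((‖z - 1‖ ^ 2 : ℝ) : ℂ) * z = -(z - 1) ^ 2 := by
    rw [Complex.ofReal_pow, ← Complex.mul_conj', map_sub, map_one]
    linear_combination (z - 1) * hconj
  have hadd : ((‖z + 1‖ ^ 2 : ℝ) : ℂ) * z = (z + 1) ^ 2 := by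
    rw [Complex.ofReal_pow, ← Complex.mul_conj', map_add, map_one]
    linear_combination (z + 1) * hconj
  have heval : aeval z (cayleyFactor a) = -(((‖z - 1‖ ^ 2 + a * ‖z + 1‖ ^ 2 : ℝ) : ℂ) * z) := by
    simp only [cayleyFactor, map_sub, map_mul, map_pow, map_add, map_one, aeval_X, aeval_C,
      Complex.coe_algebraMap]
    rw [Complex.ofReal_add, Complex.ofReal_mul]
    linear_combination hsub + a * hadd
  rw [heval, norm_neg, norm_mul, hz, mul_one, Complex.norm_real, Real.norm_eq_abs]

lemma abs_sub_le_mul_add {b r u : ℝ} (hr : 0 < r + 1) (hbu : b ≤ u) (hur : u ≤ r * b) :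
    |u - b| ≤ (r - 1) / (r + 1) * (u + b) := by
  rw [abs_of_nonneg (sub_nonneg.2 hbu), div_mul_eq_mul_div, le_div_iff₀ hr]
  linarith

lemma prod_abs_sub_le {ι : Type*} {s : Finset ι} {b : ι → ℝ} {r u : ℝ} (hb : ∀ i, 0 ≤ b i)
    (hu : 0 ≤ u) (hr : 0 < r + 1) (hs : ∃ i ∈ s, b i ≤ u ∧ u ≤ r * b i) :
    ∏ i ∈ s, |u - b i| ≤ (r - 1) / (r + 1) * ∏ i ∈ s, (u + b i) := by
  classical
  obtain ⟨i₀, hi₀, hbu, hur⟩ := hs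
  rw [← Finset.mul_prod_erase s _ hi₀, ← Finset.mul_prod_erase s (fun i => u + b i) hi₀,
    ← mul_assoc]
  have hrest : ∏ i ∈ s.erase i₀, |u - b i| ≤ ∏ i ∈ s.erase i₀, (u + b i) :=
    Finset.prod_le_prod (fun _ _ => abs_nonneg _) fun i _ =>
      abs_le.2 ⟨by linarith [hb i], by linarith [hb i]⟩
  have hnear := abs_sub_le_mul_add hr hbu hur
  exact mul_le_mul hnear hrest (Finset.prod_nonneg fun _ _ => abs_nonneg _)
    ((abs_nonneg _).trans hnear)

lemma norm_aeval_prod_cayleyFactor_neg_le (hz : ‖z‖ = 1) {ι : Type*} {s : Finset ι} {a : ι → ℝ}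
    (ha : ∀ i, 0 ≤ a i) {r : ℝ} (hr : 0 < r + 1)
    (hs : ∃ i ∈ s, a i * ‖z + 1‖ ^ 2 ≤ ‖z - 1‖ ^ 2 ∧ ‖z - 1‖ ^ 2 ≤ r * (a i * ‖z + 1‖ ^ 2)) :
    ‖aeval z (∏ i ∈ s, cayleyFactor (-a i))‖ ≤
      (r - 1) / (r + 1) * ‖aeval z (∏ i ∈ s, cayleyFactor (a i))‖ := by
  have hb : ∀ i, 0 ≤ a i * ‖z + 1‖ ^ 2 := fun i => mul_nonneg (ha i) (sq_nonneg _)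
  have hpos : ∀ i, ‖aeval z (cayleyFactor (a i))‖ = ‖z - 1‖ ^ 2 + a i * ‖z + 1‖ ^ 2 := fun i => by
    rw [norm_aeval_cayleyFactor hz, abs_of_nonneg (add_nonneg (sq_nonneg _) (hb i))]
  have hneg : ∀ i, ‖aeval z (cayleyFactor (-a i))‖ = |‖z - 1‖ ^ 2 - a i * ‖z + 1‖ ^ 2| :=
    fun i => by rw [norm_aeval_cayleyFactor hz, neg_mul, ← sub_eq_add_neg]
  simp only [map_prod, norm_prod, hpos, hneg]
  exact prod_abs_sub_le hb (sq_nonneg _) hr hs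

end UnitCircle

end CayleyFactor

section RootsOfNegOne

variable {M : ℕ} {z : ℂ}

lemma norm_eq_one_of_pow_eq_neg_one (hM : M ≠ 0) (hz : z ^ M = -1) : ‖z‖ = 1 := by
  refine (pow_eq_one_iff_of_nonneg (norm_nonneg z) hM).1 ?_
  rw [← norm_pow, hz, norm_neg, norm_one]

lemma two_le_mul_norm_sub_one (hM : M ≠ 0) (hz : z ^ M = -1) : 2 ≤ M * ‖z - 1‖ := by
  have hgeom : ‖∑ i ∈ Finset.range M, z ^ i‖ ≤ M := by
    refine (norm_sum_le _ _).trans_eq ?_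
    simp [norm_eq_one_of_pow_eq_neg_one hM hz]
  calc (2 : ℝ) = ‖z ^ M - 1‖ := by rw [hz]; norm_num
    _ = ‖∑ i ∈ Finset.range M, z ^ i‖ * ‖z - 1‖ := by rw [← norm_mul, geom_sum_mul]
    _ ≤ M * ‖z - 1‖ := mul_le_mul_of_nonneg_right hgeom (norm_nonneg _)

lemma exists_mem_range_pow_near {r t : ℝ} {m : ℕ} (hr : 1 < r) (ht : 1 ≤ t) (htm : t < r ^ m) :
    ∃ k ∈ Finset.range m, r ^ k ≤ t ∧ t ≤ r * r ^ k := by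
  obtain ⟨k, hk, hk'⟩ := exists_nat_pow_near ht hr
  refine ⟨k, Finset.mem_range.2 ((pow_lt_pow_iff_right₀ hr).1 (hk.trans_lt htm)), hk, ?_⟩
  rw [← pow_succ']
  exact hk'.le

lemma norm_sub_one_le_mul_norm_add_one (hM : M ≠ 0) (hM2 : Even M) (hz : z ^ M = -1) :
    ‖z - 1‖ ≤ M * ‖z + 1‖ := by
  have hz' : (-z) ^ M = -1 := by rw [hM2.neg_pow, hz]
  calc ‖z - 1‖ ≤ ‖z‖ + ‖(1 : ℂ)‖ := norm_sub_le _ _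
    _ = 2 := by rw [norm_eq_one_of_pow_eq_neg_one hM hz, norm_one]; norm_num
    _ ≤ M * ‖-z - 1‖ := two_le_mul_norm_sub_one hM hz'
    _ = M * ‖z + 1‖ := by rw [← neg_add', norm_neg]

lemma exists_mem_range_cayley_sq_near (hM : M ≠ 0) (hM2 : Even M) {m : ℕ} (hm : M ^ 2 < 2 ^ m)
    (hz : z ^ M = -1) :
    ∃ k ∈ Finset.range m, 4 ^ k / (M ^ 2 : ℝ) * ‖z + 1‖ ^ 2 ≤ ‖z - 1‖ ^ 2 ∧
      ‖z - 1‖ ^ 2 ≤ 4 * (4 ^ k / (M ^ 2 : ℝ) * ‖z + 1‖ ^ 2) := by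
  have hM' : (0 : ℝ) < M := Nat.cast_pos.2 (Nat.pos_of_ne_zero hM)
  have hm' : (M ^ 2 : ℝ) < 2 ^ m := mod_cast hm
  have hz' : (-z) ^ M = -1 := by rw [hM2.neg_pow, hz]
  have hsub : ‖z - 1‖ ≤ M * ‖z + 1‖ := norm_sub_one_le_mul_norm_add_one hM hM2 hz
  have hadd : ‖z + 1‖ ≤ M * ‖z - 1‖ := by
    have := norm_sub_one_le_mul_norm_add_one hM hM2 hz'
    rwa [← neg_add', norm_neg, neg_add_eq_sub, norm_sub_rev] at this
  have hpos : 0 < ‖z + 1‖ := by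
    have := two_le_mul_norm_sub_one hM hz'
    rw [← neg_add', norm_neg] at this
    exact pos_of_mul_pos_right (two_pos.trans_le this) hM'.le
  set t : ℝ := (M * ‖z - 1‖ / ‖z + 1‖) ^ 2 with ht
  have ht1 : 1 ≤ t := one_le_pow₀ ((one_le_div hpos).2 hadd)
  have htm : t < 4 ^ m :=
    calc t ≤ (M ^ 2) ^ 2 := by
          refine pow_le_pow_left₀ (by positivity) ((div_le_iff₀ hpos).2 ?_) 2
          rw [sq, mul_assoc]
          exact mul_le_mul_of_nonneg_left hsub hM'.le
      _ < (2 ^ m) ^ 2 := pow_lt_pow_left₀ hm' (by positivity) two_ne_zero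
      _ = 4 ^ m := by rw [pow_right_comm]; norm_num
  obtain ⟨k, hk, hlow, hupp⟩ := exists_mem_range_pow_near (by norm_num) ht1 htm
  have hsq : ‖z - 1‖ ^ 2 = t / M ^ 2 * ‖z + 1‖ ^ 2 := by rw [ht]; field_simp
  refine ⟨k, hk, ?_, ?_⟩
  · rw [hsq]
    gcongr
  · rw [hsq, ← mul_assoc, ← mul_div_assoc]
    gcongr

end RootsOfNegOne

section Parseval

variable {M n : ℕ} {ζ ω : ℂ}

lemma sum_pow_mul_conj_pow (hζ : ‖ζ‖ = 1) (hω : IsPrimitiveRoot ω M) {i j : ℕ} (hi : i < M)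
    (hj : j < M) :
    ∑ l ∈ Finset.range M, (ζ * ω ^ l) ^ i * conj ((ζ * ω ^ l) ^ j) =
      if i = j then (M : ℂ) else 0 := by
  have hω1 : ‖ω‖ = 1 := hω.norm'_eq_one (by omega)
  have hconj : ∀ z : ℂ, ‖z‖ = 1 → z * conj z = 1 := fun z hz => by simp [Complex.mul_conj', hz]
  split_ifs with hij
  · subst hij
    rw [Finset.sum_congr rfl fun l _ => hconj _ (by simp [hζ, hω1])]
    simp
  · have hterm : ∀ l, (ζ * ω ^ l) ^ i * conj ((ζ * ω ^ l) ^ j) =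
        ζ ^ i * conj (ζ ^ j) * (ω ^ i * conj (ω ^ j)) ^ l := fun l => by
      simp only [map_mul, map_pow]
      ring
    have hroot : (ω ^ i * conj (ω ^ j)) ^ M = 1 := by
      rw [mul_pow, ← map_pow, pow_right_comm, pow_right_comm ω j, hω.pow_eq_one]
      simp
    have hne : ω ^ i * conj (ω ^ j) ≠ 1 := fun h => hij <| hω.pow_inj hi hj <| by
      linear_combination ω ^ j * h - ω ^ i * hconj (ω ^ j) (by simp [hω1])
    rw [Finset.sum_congr rfl fun l _ => hterm l, ← Finset.mul_sum, geom_sum_eq hne, hroot]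
    simp

lemma norm_aeval_sq_eq_sum_toFn {q : ℝ[X]} (hq : q.natDegree < n) (z : ℂ) :
    ((‖aeval z q‖ ^ 2 : ℝ) : ℂ) =
      ∑ i, ∑ j, ((toFn n q i : ℝ) * (toFn n q j : ℝ) : ℂ) *
        (z ^ (i : ℕ) * conj (z ^ (j : ℕ))) := by
  have haeval : aeval z q = ∑ i, ((toFn n q i : ℝ) : ℂ) * z ^ (i : ℕ) := by
    rw [aeval_eq_sum_range' hq, ← Fin.sum_univ_eq_sum_range (fun i => q.coeff i • z ^ i)]
    exact Finset.sum_congr rfl fun i _ => Complex.real_smul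
  rw [Complex.ofReal_pow, ← Complex.mul_conj', haeval, map_sum, Finset.sum_mul_sum]
  refine Finset.sum_congr rfl fun i _ => Finset.sum_congr rfl fun j _ => ?_
  rw [map_mul, Complex.conj_ofReal]
  ring

lemma sum_norm_aeval_sq (hζ : ‖ζ‖ = 1) (hω : IsPrimitiveRoot ω M) (hnM : n ≤ M) {q : ℝ[X]}
    (hq : q.natDegree < n) :
    ∑ l ∈ Finset.range M, ‖aeval (ζ * ω ^ l) q‖ ^ 2 = M * (toFn n q ⬝ᵥ toFn n q) := by
  have horth : ∀ i j : Fin n,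
      ∑ l ∈ Finset.range M, (ζ * ω ^ l) ^ (i : ℕ) * conj ((ζ * ω ^ l) ^ (j : ℕ)) =
        if i = j then (M : ℂ) else 0 := fun i j => by
    rw [sum_pow_mul_conj_pow hζ hω (i.2.trans_le hnM) (j.2.trans_le hnM)]
    simp only [Fin.ext_iff]
  rw [← Complex.ofReal_inj, Complex.ofReal_sum]
  simp only [norm_aeval_sq_eq_sum_toFn hq]
  rw [Finset.sum_comm]
  simp only [Finset.sum_comm (s := Finset.range M), ← Finset.mul_sum, horth, mul_ite, mul_zero,
    Finset.sum_ite_eq, Finset.mem_univ, if_true]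
  simp only [dotProduct, Complex.ofReal_mul, Complex.ofReal_sum, Complex.ofReal_natCast,
    Finset.mul_sum]
  exact Finset.sum_congr rfl fun i _ => by ring

lemma toFn_dotProduct_toFn_le_of_norm_aeval_le (hM : M ≠ 0) (hnM : n ≤ M) {p q : ℝ[X]}
    (hp : p.natDegree < n) (hq : q.natDegree < n) {c : ℝ}
    (hpq : ∀ z : ℂ, z ^ M = -1 → ‖aeval z p‖ ≤ c * ‖aeval z q‖) :
    toFn n p ⬝ᵥ toFn n p ≤ c ^ 2 * (toFn n q ⬝ᵥ toFn n q) := by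
  obtain ⟨ζ, hζ⟩ : ∃ ζ : ℂ, ζ ^ M = -1 := IsAlgClosed.exists_pow_nat_eq (-1) (by omega)
  have hζ1 := norm_eq_one_of_pow_eq_neg_one hM hζ
  have hω := Complex.isPrimitiveRoot_exp M hM
  set ω := Complex.exp (2 * Real.pi * Complex.I / M)
  have hnode : ∀ l, (ζ * ω ^ l) ^ M = -1 := fun l => by
    rw [mul_pow, hζ, pow_right_comm, hω.pow_eq_one, one_pow, mul_one]
  refine le_of_mul_le_mul_left ?_ (Nat.cast_pos.2 (Nat.pos_of_ne_zero hM) : (0 : ℝ) < M)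
  calc (M : ℝ) * (toFn n p ⬝ᵥ toFn n p)
      = ∑ l ∈ Finset.range M, ‖aeval (ζ * ω ^ l) p‖ ^ 2 := (sum_norm_aeval_sq hζ1 hω hnM hp).symm
    _ ≤ ∑ l ∈ Finset.range M, (c * ‖aeval (ζ * ω ^ l) q‖) ^ 2 := by
        gcongr with l
        exact hpq _ (hnode l)
    _ = M * (c ^ 2 * (toFn n q ⬝ᵥ toFn n q)) := by
        simp only [mul_pow, ← Finset.mul_sum]
        rw [sum_norm_aeval_sq hζ1 hω hnM hq]
        ring

end Parseval

section HankelDecay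

variable {n : ℕ} {U : Matrix (Fin n) (Fin n) ℝ} {l : Fin n → ℝ}

lemma IsHankel.eigenvalue_le_mul_of_near (hU : U ∈ orthogonalGroup (Fin n) ℝ) (hl : Antitone l)
    (hH : IsHankel (U * diagonal l * Uᵀ)) (hpos : (U * diagonal l * Uᵀ).PosSemidef) {M : ℕ}
    (hM : M ≠ 0) (hnM : n ≤ M) {ι : Type*} {s : Finset ι} {a : ι → ℝ} (ha : ∀ i, 0 ≤ a i) {r : ℝ}
    (hr : 0 < r + 1)
    (hs : ∀ z : ℂ, z ^ M = -1 →
      ∃ i ∈ s, a i * ‖z + 1‖ ^ 2 ≤ ‖z - 1‖ ^ 2 ∧ ‖z - 1‖ ^ 2 ≤ r * (a i * ‖z + 1‖ ^ 2))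
    {i j : Fin n} (hi : 0 ≤ l i) (hij : i + 2 * s.card ≤ j) :
    l j ≤ ((r - 1) / (r + 1)) ^ 2 * l i := by
  obtain ⟨h, hh⟩ := hH.exists_moments
  let coeffMul (p : ℝ[X]) : (Fin (n - 2 * s.card) → ℝ) →ₗ[ℝ] Fin n → ℝ :=
    toFn n ∘ₗ LinearMap.mulLeft ℝ p ∘ₗ ofFn _
  have hdeg : ∀ w : Fin (n - 2 * s.card) → ℝ, (ofFn _ w).natDegree + 2 * s.card < n := fun w => by
    have := ofFn_natDegree_lt (by omega) w
    omega
  have hP := fun w => natDegree_prod_cayleyFactor_mul_lt (fun i => -a i) (hdeg w)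
  have hQ := fun w => natDegree_prod_cayleyFactor_mul_lt a (hdeg w)
  refine le_mul_of_forall_dotProduct_le hU hl (P := coeffMul (∏ i ∈ s, cayleyFactor (-a i)))
    (Q := coeffMul (∏ i ∈ s, cayleyFactor (a i))) ?_ (fun w => ?_) (fun w => ?_) hi ?_
  · refine (injective_iff_map_eq_zero _).2 fun w hw => by_contra fun hw0 => ?_
    exact toFn_ne_zero (hQ w) (mul_ne_zero
      (Finset.prod_ne_zero_iff.2 fun i _ => cayleyFactor_ne_zero (a i))
      fun h => hw0 ((map_eq_zero_iff _ (injective_ofFn _)).1 h)) hw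
  · refine (toFn_dotProduct_mulVec_toFn hh (hQ w) (hQ w)).trans_le ?_
    refine le_of_le_of_eq ?_ (toFn_dotProduct_mulVec_toFn hh (hP w) (hP w)).symm
    rw [← sq, ← sq]
    exact map_prod_cayleyFactor_mul_sq_le
      (fun q hq => momentFunctional_sq_nonneg hpos hh hq) ha s (hdeg w)
  · refine toFn_dotProduct_toFn_le_of_norm_aeval_le hM hnM (hP w) (hQ w) fun z hz => ?_
    rw [map_mul, map_mul, norm_mul, norm_mul, ← mul_assoc]
    exact mul_le_mul_of_nonneg_right (norm_aeval_prod_cayleyFactor_neg_le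
      (norm_eq_one_of_pow_eq_neg_one hM hz) ha hr (hs z hz)) (norm_nonneg _)
  · rw [Module.finrank_fin_fun]
    omega

lemma IsHankel.eigenvalue_le_mul (hU : U ∈ orthogonalGroup (Fin n) ℝ) (hl : Antitone l)
    (hH : IsHankel (U * diagonal l * Uᵀ)) (hpos : (U * diagonal l * Uᵀ).PosSemidef) {m : ℕ}
    (hm : (2 * n) ^ 2 < 2 ^ m) {i j : Fin n} (hi : 0 ≤ l i) (hij : i + 2 * m ≤ j) :
    l j ≤ 9 / 25 * l i := by
  have hn : 0 < n := i.pos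
  have hdecay := hH.eigenvalue_le_mul_of_near hU hl hpos (M := 2 * n) (by omega) (by omega)
    (s := Finset.range m) (a := fun k => 4 ^ k / ((2 * n : ℕ) : ℝ) ^ 2) (fun k => by positivity)
    (r := 4) (by norm_num)
    (fun z hz => exists_mem_range_cayley_sq_near (by omega) (even_two_mul n) hm hz) hi
    (by rwa [Finset.card_range])
  norm_num at hdecay
  exact hdecay

lemma IsHankel.sum_Ici_eigenvalue_sq_le (hU : U ∈ orthogonalGroup (Fin n) ℝ) (hl : Antitone l)
    (hl0 : 0 ≤ l) (hH : IsHankel (U * diagonal l * Uᵀ)) (hpos : (U * diagonal l * Uᵀ).PosSemidef)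
    {m : ℕ} (hm : (2 * n) ^ 2 < 2 ^ m) (k : Fin n) :
    ∑ i ∈ Finset.Ici k, l i ^ 2 ≤ 4 * m * l k ^ 2 := by
  have htail := one_sub_mul_sum_Ici_le (s := 2 * m) (g := fun i => l i ^ 2) (c := (9 / 25) ^ 2)
    (fun i j hij => pow_le_pow_left₀ (hl0 j) (hl hij) 2) (fun i => sq_nonneg (l i)) (by norm_num)
    (fun i j hij => by
      rw [← mul_pow]
      exact pow_le_pow_left₀ (hl0 j) (hH.eigenvalue_le_mul hU hl hpos hm (hl0 i) hij) 2) k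
  have hsum : 0 ≤ ∑ i ∈ Finset.Ici k, l i ^ 2 := by positivity
  push_cast at htail
  linarith

end HankelDecay

lemma exists_two_pow_gt_and_le_log {n : ℕ} (hn : 2 ≤ n) :
    ∃ m : ℕ, (2 * n) ^ 2 < 2 ^ m ∧ (m : ℝ) ≤ 9 * Real.log n := by
  refine ⟨2 * Nat.log 2 n + 4, ?_, ?_⟩
  · calc (2 * n) ^ 2 < (2 * 2 ^ (Nat.log 2 n + 1)) ^ 2 := by
          gcongr
          exact Nat.lt_pow_succ_log_self (by norm_num) n
      _ = 2 ^ (2 * Nat.log 2 n + 4) := by ring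
  · have hlog1 : (1 : ℝ) ≤ Nat.log 2 n := mod_cast Nat.log_pos (by norm_num) hn
    have hlog : Nat.log 2 n * Real.log 2 ≤ Real.log n := by
      rw [← Real.log_pow]
      exact Real.log_le_log (by positivity) (mod_cast Nat.pow_log_le_self 2 (by omega))
    push_cast
    nlinarith [Real.log_two_gt_d9]

lemma IsHankel.exists_rank_le_froNorm_sub_le {n : ℕ} (hn : 2 ≤ n) {H : Matrix (Fin n) (Fin n) ℝ}
    (hH : IsHankel H) (hpos : H.PosSemidef) {k : ℕ} {B : Matrix (Fin n) (Fin n) ℝ}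
    (hB : B.rank ≤ k) :
    ∃ B' : Matrix (Fin n) (Fin n) ℝ, B'.rank ≤ k ∧
      froNorm (H - B') ≤ 6 * Real.sqrt (Real.log n) * specNorm (H - B) := by
  rcases le_or_gt n k with hnk | hkn
  · have hzero : froNorm (H - H) = 0 := by simp [froNorm]
    refine ⟨H, H.rank_le_width.trans hnk, hzero.trans_le ?_⟩
    exact mul_nonneg (by positivity) (specNorm_nonneg _)
  obtain ⟨m, hm, hmlog⟩ := exists_two_pow_gt_and_le_log hn
  obtain ⟨U, hU, σ, hl, hHU⟩ := exists_orthogonal_antitone_diagonalization hpos.isHermitian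
  have hl0 : 0 ≤ hpos.isHermitian.eigenvalues ∘ σ := fun i => hpos.eigenvalues_nonneg (σ i)
  set l := hpos.isHermitian.eigenvalues ∘ σ
  clear_value l
  subst hHU
  obtain ⟨B', hB', hfro⟩ := exists_rank_le_froNorm_conj_diagonal_sub_sq_eq hU l ⟨k, hkn⟩
  refine ⟨B', hB', le_of_sq_le_sq ?_ (mul_nonneg (by positivity) (specNorm_nonneg _))⟩
  calc froNorm (U * diagonal l * Uᵀ - B') ^ 2
      ≤ 4 * m * l ⟨k, hkn⟩ ^ 2 := hfro.trans_le (hH.sum_Ici_eigenvalue_sq_le hU hl hl0 hpos hm _)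
    _ ≤ 4 * (9 * Real.log n) * specNorm (U * diagonal l * Uᵀ - B) ^ 2 := by
        gcongr
        · exact hl0 _
        · exact le_specNorm_conj_diagonal_sub hU hl hB
    _ = (6 * Real.sqrt (Real.log n) * specNorm (U * diagonal l * Uᵀ - B)) ^ 2 := by
        rw [mul_pow, mul_pow, Real.sq_sqrt (Real.log_natCast_nonneg n)]
        ring

theorem posdef_hankel_frobenius_vs_spectral_general :
    ∃ C : ℝ, 0 < C ∧
      ∀ (n : ℕ), 2 ≤ n →
        ∀ H : Matrix (Fin n) (Fin n) ℝ, H.PosSemidef → IsHankel H →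
          (∀ k : ℕ,
            ∀ B : Matrix (Fin n) (Fin n) ℝ, B.rank ≤ k →
              ∃ B' : Matrix (Fin n) (Fin n) ℝ, B'.rank ≤ k ∧
                froNorm (H - B') ≤ C * Real.sqrt (Real.log n) * specNorm (H - B)) ∧
          froNorm H ≤ C * Real.sqrt (Real.log n) * specNorm H := by
  refine ⟨6, by norm_num, fun n hn H hpos hH =>
    ⟨fun k B hB => hH.exists_rank_le_froNorm_sub_le hn hpos hB, ?_⟩⟩
  obtain ⟨B', hB', hfro⟩ := hH.exists_rank_le_froNorm_sub_le hn hpos (k := 0) (B := 0) (by simp)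
  rwa [eq_zero_of_rank_eq_zero (Nat.le_zero.1 hB'), sub_zero] at hfro

/-- (Lemma: implication 2 of Corollary 5.5 of Beckermann–Townsend.)
For a positive definite Hankel matrix `H` and any `0 ≤ k ≤ n`, the best rank-`k`
approximation satisfies `‖H − H_k‖_F ≤ C √(ln n) ‖H − H_k‖₂`.  Since the truncated
eigendecomposition `H_k` simultaneously minimizes the spectral and the Frobenius error over
all matrices of rank at most `k` (Eckart–Young), this is expressed equivalently as:
for every `B` of rank at most `k` there is `B'` of rank at most `k` with
`‖H − B'‖_F ≤ C √(ln n) ‖H − B‖₂`.  In particular (`k = 0`), `‖H‖_F ≤ C √(ln n) ‖H‖₂`. -/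
theorem posdef_hankel_frobenius_vs_spectral :
    ∃ C : ℝ, 0 < C ∧
      ∀ (n : ℕ), 2 ≤ n →
        ∀ H : Matrix (Fin n) (Fin n) ℝ, H.PosDef → IsHankel H →
          (∀ k : ℕ, k ≤ n →
            ∀ B : Matrix (Fin n) (Fin n) ℝ, B.rank ≤ k →
              ∃ B' : Matrix (Fin n) (Fin n) ℝ, B'.rank ≤ k ∧
                froNorm (H - B') ≤ C * Real.sqrt (Real.log n) * specNorm (H - B)) ∧
          froNorm H ≤ C * Real.sqrt (Real.log n) * specNorm H := by
  obtain ⟨C, hC, h⟩ := posdef_hankel_frobenius_vs_spectral_general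
  exact ⟨C, hC, fun n hn H hH hHankel =>
    (h n hn H hH.posSemidef hHankel).imp_left fun hk k _ => hk k⟩
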